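/- Let G be a simple undirected graph, Q a finite clique in G, u ∈ Q, and S a finite set of vertices disjoint from Q such that S is a clique in G and every vertex v ∈ S has set of non-neighbors in Q exactly equal to {u}. Then (Q \ {u}) ∪ S is a clique of cardinality |Q| − 1 + |S|; in particular, if |S| ≥ 2 then this clique is strictly larger than Q. -/

import Mathlib

/-!
More generally, exchange any `T ⊆ Q` for a clique `S` whose vertices miss only vertices of `T`.
Then every vertex of `S` is adjacent to every vertex of `Q \ T`, so the union is a clique.
Adjacency is irreflexive, so the two parts are disjoint and their cardinalities add up.
-/

theorem encard_sdiff_union_add_encard {α : Type*} {s t u : Set α} (hts : t ⊆ s)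
    (hdisj : Disjoint (s \ t) u) : ((s \ t) ∪ u).encard + t.encard = s.encard + u.encard := by
  rw [Set.encard_union_eq hdisj, add_right_comm, Set.encard_sdiff_add_encard_of_subset hts]

section Clique

variable {V : Type*} {G : SimpleGraph V} {Q S T : Set V}

theorem isCompleteBetween_sdiff_iff :
    G.IsCompleteBetween S (Q \ T) ↔ ∀ v ∈ S, {x ∈ Q | ¬ G.Adj v x} ⊆ T := by
  refine ⟨fun h v hv x ⟨hxQ, hvx⟩ ↦ ?_, fun h v hv x ⟨hxQ, hxT⟩ ↦ ?_⟩
  · by_contra hxT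
    exact hvx (h hv ⟨hxQ, hxT⟩)
  · by_contra hvx
    exact hxT (h v hv ⟨hxQ, hvx⟩)

theorem isClique_union_iff_of_disjoint (hdisj : Disjoint S T) :
    G.IsClique (S ∪ T) ↔ G.IsClique S ∧ G.IsClique T ∧ G.IsCompleteBetween S T := by
  have := G.symm
  rw [SimpleGraph.IsClique, Set.pairwise_union_of_symm]
  refine and_congr_right' (and_congr_right' ?_)
  exact ⟨fun h v hv w hw ↦ h v hv w hw (hdisj.ne_of_mem hv hw), fun h v hv w hw _ ↦ h hv hw⟩

end Clique

theorem clique_one_k_swap_card_general {V : Type*} (G : SimpleGraph V) (Q S T : Set V)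
    (hQ : G.IsClique Q) (hT : T ⊆ Q) (hS : G.IsClique S)
    (hcand : ∀ v ∈ S, {x ∈ Q | ¬ G.Adj v x} ⊆ T) :
    G.IsClique ((Q \ T) ∪ S) ∧
      ((Q \ T) ∪ S).encard + T.encard = Q.encard + S.encard ∧
      (Q.Finite → T.encard < S.encard → Q.encard < ((Q \ T) ∪ S).encard) := by
  have hcomplete : G.IsCompleteBetween (Q \ T) S := (isCompleteBetween_sdiff_iff.2 hcand).symm
  have hcard := encard_sdiff_union_add_encard hT hcomplete.disjoint
  refine ⟨?_, hcard, fun hQfin hlt ↦ ?_⟩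
  · exact (isClique_union_iff_of_disjoint hcomplete.disjoint).2
      ⟨hQ.subset Set.sdiff_subset, hS, hcomplete⟩
  · have hTfin : T.encard ≠ ⊤ := Set.encard_ne_top_iff.2 (hQfin.subset hT)
    rw [← ENat.add_lt_add_iff_right hTfin, hcard]
    exact (ENat.add_lt_add_iff_left (Set.encard_ne_top_iff.2 hQfin)).2 hlt

/-- The (1,k)-swap yields a clique of cardinality `|Q| - 1 + |S|`; if `|S| ≥ 2`
the new clique is strictly larger than `Q`. -/
theorem clique_one_k_swap_card {V : Type*} (G : SimpleGraph V) (Q S : Set V) (u : V)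
    (hQ : G.IsClique Q) (hQfin : Q.Finite) (hu : u ∈ Q)
    (hSfin : S.Finite) (hdisj : Disjoint S Q) (hS : G.IsClique S)
    (hcand : ∀ v ∈ S, {x ∈ Q | ¬ G.Adj v x} = {u}) :
    G.IsClique ((Q \ {u}) ∪ S) ∧
      ((Q \ {u}) ∪ S).ncard = Q.ncard - 1 + S.ncard ∧
      (2 ≤ S.ncard → Q.ncard < ((Q \ {u}) ∪ S).ncard) := by
  obtain ⟨hclique, hcard, hlt⟩ := clique_one_k_swap_card_general G Q S {u} hQ
    (Set.singleton_subset_iff.2 hu) hS fun v hv ↦ (hcand v hv).subset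
  have hQpos : 0 < Q.ncard := (Set.ncard_pos hQfin).2 ⟨u, hu⟩
  simp only [Set.encard_singleton, ← hQfin.cast_ncard_eq, ← hSfin.cast_ncard_eq,
    ← (hQfin.sdiff.union hSfin).cast_ncard_eq] at hcard hlt
  norm_cast at hcard hlt
  exact ⟨hclique, by lia, hlt hQfin⟩
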